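/- The inducibility of the directed path on four vertices in the family of T⃗₃-free oriented graphs equals 24/125; that is, the limit as n → ∞ of the maximum, over all T⃗₃-free oriented graphs G on n vertices, of the density of induced copies of P⃗₄ in G, exists and equals 24/125. -/

import Mathlib

open scoped Classical

/-- An oriented graph: the arc relation has no loops and no 2-cycles. -/
def IsOriented {V : Type*} (A : V → V → Prop) : Prop :=
  ∀ a b : V, A a b → ¬ A b a

/-- `T⃗₃`-freeness: no three vertices span the arcs a→b, b→c, a→c. -/
def T3Free {V : Type*} (A : V → V → Prop) : Prop :=
  ∀ a b c : V, ¬ (A a b ∧ A b c ∧ A a c)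

/-- `S` is the vertex set of an induced copy of the directed path `P⃗ₖ` in the
oriented graph with arc relation `A`. -/
def IsInducedPath {V : Type*} (A : V → V → Prop) (k : ℕ) (S : Finset V) : Prop :=
  ∃ f : Fin k → V, Function.Injective f ∧ (∀ v : V, v ∈ S ↔ ∃ i, f i = v) ∧
    ∀ i j : Fin k, A (f i) (f j) ↔ (j : ℕ) = (i : ℕ) + 1

/-- The number of induced copies of `P⃗ₖ`. -/
noncomputable def numPaths {V : Type*} [Fintype V] [DecidableEq V]
    (A : V → V → Prop) (k : ℕ) : ℕ :=
  (Finset.univ.filter fun S : Finset V => IsInducedPath A k S).card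

/-- The number of induced copies of `P⃗ₖ` containing all vertices of `T`. -/
noncomputable def numPathsThrough {V : Type*} [Fintype V] [DecidableEq V]
    (A : V → V → Prop) (k : ℕ) (T : Finset V) : ℕ :=
  (Finset.univ.filter fun S : Finset V => IsInducedPath A k S ∧ T ⊆ S).card

/-- The density of induced copies of `P⃗ₖ`. -/
noncomputable def pathDensity {V : Type*} [Fintype V] [DecidableEq V]
    (A : V → V → Prop) (k : ℕ) : ℝ :=
  (numPaths A k : ℝ) / ((Fintype.card V).choose k : ℝ)

/-- The maximum density of induced copies of `P⃗ₖ` over all `T⃗₃`-free oriented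
graphs on `n` vertices. -/
noncomputable def maxDensityT3 (k n : ℕ) : ℝ :=
  sSup {d : ℝ | ∃ A : Fin n → Fin n → Prop, IsOriented A ∧ T3Free A ∧ d = pathDensity A k}

/-- The maximum density of induced copies of `P⃗ₖ` over all oriented graphs on `n`
vertices. -/
noncomputable def maxDensityAll (k n : ℕ) : ℝ :=
  sSup {d : ℝ | ∃ A : Fin n → Fin n → Prop, IsOriented A ∧ d = pathDensity A k}

/-- `S` is the vertex set of an induced copy of the oriented graph `H` in the
oriented graph with arc relation `A`. -/
def IsInducedCopy {V W : Type*} (H : W → W → Prop) (A : V → V → Prop) (S : Finset V) : Prop :=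
  ∃ f : W → V, Function.Injective f ∧ (∀ v : V, v ∈ S ↔ ∃ w, f w = v) ∧
    ∀ a b : W, A (f a) (f b) ↔ H a b

/-- The number of induced copies of `H` in `A`. -/
noncomputable def numCopies {V W : Type*} [Fintype V] [DecidableEq V]
    (H : W → W → Prop) (A : V → V → Prop) : ℕ :=
  (Finset.univ.filter fun S : Finset V => IsInducedCopy H A S).card

/-- The number of (unordered) pairs of vertices on which the two oriented graphs `A`
and `B` differ (an arc must be added, removed, or reoriented). -/
noncomputable def pairDiff {V : Type*} [Fintype V] [LinearOrder V]
    (A B : V → V → Prop) : ℕ :=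
  (Finset.univ.filter fun p : V × V => p.1 < p.2 ∧
    ¬ ((A p.1 p.2 ↔ B p.1 p.2) ∧ (A p.2 p.1 ↔ B p.2 p.1))).card

/-- `A` is a blow-up of the directed 5-cycle with parts given by the fibers of `g`. -/
def IsBlowupC5 {V : Type*} (A : V → V → Prop) (g : V → Fin 5) : Prop :=
  ∀ u v : V, A u v ↔ g v = g u + 1

/-- The size of the part of vertices mapped to `i`. -/
noncomputable def partSize {V : Type*} [Fintype V] {m : ℕ} (g : V → Fin m) (i : Fin m) : ℕ :=
  (Finset.univ.filter fun v : V => g v = i).card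

/-- `A` is a balanced blow-up of the directed 5-cycle, i.e. isomorphic to `C⃗₅(n)`. -/
def IsBalancedBlowupC5 {V : Type*} [Fintype V] (A : V → V → Prop) : Prop :=
  ∃ g : V → Fin 5, IsBlowupC5 A g ∧
    ∀ i j : Fin 5, (partSize g i : ℤ) - (partSize g j : ℤ) ≤ 1


namespace P4

/-- Orientation of an ordered pair: no arc, forward arc, backward arc. -/
inductive T where
  | z | p | m
deriving DecidableEq

/-- Five labels. -/
inductive I5 where
  | v0 | v1 | v2 | v3 | v4
deriving DecidableEq

open I5

instance : Fintype I5 := ⟨⟨[v0, v1, v2, v3, v4], by decide⟩, by intro x; cases x <;> decide⟩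

/-- One-vertex flags of size three. -/
inductive Key where
  | k0 | k1 | k2 | k3 | k4 | k5 | k6 | k7 | k8 | k9 | k10 | k11

def neg : T → T
  | .z => .z | .p => .m | .m => .p

def key : T → T → T → Key
  | .z, .z, .z => .k0
  | .z, .z, _ => .k1
  | .p, .z, .z => .k2
  | .z, .p, .z => .k2
  | .z, .m, .z => .k3
  | .m, .z, .z => .k3
  | .p, .z, .m => .k4
  | .z, .p, .p => .k4
  | .m, .m, .z => .k5
  | .p, .z, .p => .k6
  | .z, .p, .m => .k6
  | .z, .m, .p => .k7
  | .m, .z, .m => .k7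
  | .p, .m, .z => .k8
  | .m, .p, .z => .k8
  | .z, .m, .m => .k9
  | .m, .z, .p => .k9
  | .p, .p, .z => .k10
  | _, _, _ => .k11

def sel (n0 n1 n2 n3 n4 n5 n6 n7 n8 n9 n10 n11 : ℕ) : Key → ℕ
  | .k0 => n0 | .k1 => n1 | .k2 => n2 | .k3 => n3 | .k4 => n4 | .k5 => n5
  | .k6 => n6 | .k7 => n7 | .k8 => n8 | .k9 => n9 | .k10 => n10 | .k11 => n11

def sel' (n0 n1 n2 n3 n4 n5 n6 n7 n8 n9 n10 n11 : ℤ) : Key → ℤ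
  | .k0 => n0 | .k1 => n1 | .k2 => n2 | .k3 => n3 | .k4 => n4 | .k5 => n5
  | .k6 => n6 | .k7 => n7 | .k8 => n8 | .k9 => n9 | .k10 => n10 | .k11 => n11

/-- The matrix of the quadratic form on flags, shifted by 876. -/
def qt : Key → Key → ℕ
  | .k0 => sel 956 1076 896 896 806 836 856 856 576 806 836 876
  | .k1 => sel 1076 1596 896 896 706 716 834 834 0 706 716 876
  | .k2 => sel 896 896 1046 746 856 596 946 706 866 856 1196 876
  | .k3 => sel 896 896 746 1046 856 1196 706 946 866 856 596 876
  | .k4 => sel 806 706 856 856 1066 906 844 844 985 1066 906 876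
  | .k5 => sel 836 716 596 1196 906 1556 556 1036 1156 906 356 876
  | .k6 => sel 856 834 946 706 844 556 1352 872 760 844 1036 876
  | .k7 => sel 856 834 706 946 844 1036 872 1352 760 844 556 876
  | .k8 => sel 576 0 866 866 985 1156 760 760 2556 985 1156 876
  | .k9 => sel 806 706 856 856 1066 906 844 844 985 1066 906 876
  | .k10 => sel 836 716 1196 596 906 356 1036 556 1156 906 1556 876
  | .k11 => sel 876 876 876 876 876 876 876 876 876 876 876 876

def g1 : Key → ℤ := sel' 0 1 0 0 0 0 0 0 (-1) 0 0 0
def g2 : Key → ℤ := sel' 0 2 0 0 (-1) 0 0 0 0 (-1) 0 0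
def g3 : Key → ℤ := sel' 0 2 0 0 0 0 (-1) (-1) 0 0 0 0
def g4 : Key → ℤ := sel' 2 (-5) 0 0 0 (-2) 0 0 0 0 (-2) 0
def g5 : Key → ℤ := sel' 0 (-4) 1 1 0 2 0 0 0 0 2 0
def g6 : Key → ℤ := sel' 0 0 1 (-1) 0 (-2) 0 0 0 0 2 0
def g7 : Key → ℤ := sel' 0 0 0 0 0 0 1 (-1) 0 0 0 0

theorem qt_eq (a b : Key) : (qt a b : ℤ) = 876 +
    (1680 * (g1 a * g1 b) + 109 * (g1 a * g2 b + g2 a * g1 b) - 116 * (g1 a * g3 b + g3 a * g1 b)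
      + 150 * (g1 a * g4 b + g4 a * g1 b) + 10 * (g1 a * g5 b + g5 a * g1 b)
      + 190 * (g2 a * g2 b) - 32 * (g2 a * g3 b + g3 a * g2 b) + 35 * (g2 a * g4 b + g4 a * g2 b)
      + 20 * (g2 a * g5 b + g5 a * g2 b) + 236 * (g3 a * g3 b) + 10 * (g3 a * g4 b + g4 a * g3 b)
      + 50 * (g3 a * g5 b + g5 a * g3 b) + 20 * (g4 a * g4 b) + 10 * (g4 a * g5 b + g5 a * g4 b)
      + 20 * (g5 a * g5 b) + 150 * (g6 a * g6 b) + 120 * (g6 a * g7 b + g7 a * g6 b)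
      + 240 * (g7 a * g7 b)) := by
  cases a <;> cases b <;> rfl

def p4 : T → T → T → T → T → T → ℕ
  | .p, .p, .p, .z, .z, .z => 10000
  | _, _, _, _, _, _ => 0

def p3 : T → T → T → Bool
  | .p, .p, .z => true
  | _, _, _ => false

def hv : T → T → T → T
  | .p, .z, .z => .p
  | .m, .z, .z => .m
  | _, _, _ => .z

def hm : T → T → ℕ
  | .p, .p => 2400
  | .m, .m => 2400
  | .p, .m => 0
  | .m, .p => 0
  | _, _ => 1200

def ht : Bool → T → T → ℕ
  | true, a, b => hm a b
  | false, _, _ => 1200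

structure T5 where
  a : I5
  b : I5
  c : I5
  d : I5
  e : I5
deriving DecidableEq

def T5.f (t : T5) : I5 → I5
  | v0 => t.a | v1 => t.b | v2 => t.c | v3 => t.d | v4 => t.e

/-- The local weight of a labelled graph. -/
def w (M : I5 → I5 → T) : T5 → ℕ
  | ⟨a, b, c, d, e⟩ =>
    p4 (M a b) (M b c) (M c d) (M a c) (M b d) (M a d)
    + qt (key (M a b) (M a c) (M b c)) (key (M a d) (M a e) (M d e))
    + ht (p3 (M a b) (M b c) (M a c)) (hv (M d b) (M d a) (M d c)) (hv (M e b) (M e a) (M e c))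

def perms : List T5 := [
  ⟨v0, v1, v2, v3, v4⟩, ⟨v0, v1, v2, v4, v3⟩, ⟨v0, v1, v3, v2, v4⟩, ⟨v0, v1, v3, v4, v2⟩,
  ⟨v0, v1, v4, v2, v3⟩, ⟨v0, v1, v4, v3, v2⟩, ⟨v0, v2, v1, v3, v4⟩, ⟨v0, v2, v1, v4, v3⟩,
  ⟨v0, v2, v3, v1, v4⟩, ⟨v0, v2, v3, v4, v1⟩, ⟨v0, v2, v4, v1, v3⟩, ⟨v0, v2, v4, v3, v1⟩,
  ⟨v0, v3, v1, v2, v4⟩, ⟨v0, v3, v1, v4, v2⟩, ⟨v0, v3, v2, v1, v4⟩, ⟨v0, v3, v2, v4, v1⟩,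
  ⟨v0, v3, v4, v1, v2⟩, ⟨v0, v3, v4, v2, v1⟩, ⟨v0, v4, v1, v2, v3⟩, ⟨v0, v4, v1, v3, v2⟩,
  ⟨v0, v4, v2, v1, v3⟩, ⟨v0, v4, v2, v3, v1⟩, ⟨v0, v4, v3, v1, v2⟩, ⟨v0, v4, v3, v2, v1⟩,
  ⟨v1, v0, v2, v3, v4⟩, ⟨v1, v0, v2, v4, v3⟩, ⟨v1, v0, v3, v2, v4⟩, ⟨v1, v0, v3, v4, v2⟩,
  ⟨v1, v0, v4, v2, v3⟩, ⟨v1, v0, v4, v3, v2⟩, ⟨v1, v2, v0, v3, v4⟩, ⟨v1, v2, v0, v4, v3⟩,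
  ⟨v1, v2, v3, v0, v4⟩, ⟨v1, v2, v3, v4, v0⟩, ⟨v1, v2, v4, v0, v3⟩, ⟨v1, v2, v4, v3, v0⟩,
  ⟨v1, v3, v0, v2, v4⟩, ⟨v1, v3, v0, v4, v2⟩, ⟨v1, v3, v2, v0, v4⟩, ⟨v1, v3, v2, v4, v0⟩,
  ⟨v1, v3, v4, v0, v2⟩, ⟨v1, v3, v4, v2, v0⟩, ⟨v1, v4, v0, v2, v3⟩, ⟨v1, v4, v0, v3, v2⟩,
  ⟨v1, v4, v2, v0, v3⟩, ⟨v1, v4, v2, v3, v0⟩, ⟨v1, v4, v3, v0, v2⟩, ⟨v1, v4, v3, v2, v0⟩,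
  ⟨v2, v0, v1, v3, v4⟩, ⟨v2, v0, v1, v4, v3⟩, ⟨v2, v0, v3, v1, v4⟩, ⟨v2, v0, v3, v4, v1⟩,
  ⟨v2, v0, v4, v1, v3⟩, ⟨v2, v0, v4, v3, v1⟩, ⟨v2, v1, v0, v3, v4⟩, ⟨v2, v1, v0, v4, v3⟩,
  ⟨v2, v1, v3, v0, v4⟩, ⟨v2, v1, v3, v4, v0⟩, ⟨v2, v1, v4, v0, v3⟩, ⟨v2, v1, v4, v3, v0⟩,
  ⟨v2, v3, v0, v1, v4⟩, ⟨v2, v3, v0, v4, v1⟩, ⟨v2, v3, v1, v0, v4⟩, ⟨v2, v3, v1, v4, v0⟩,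
  ⟨v2, v3, v4, v0, v1⟩, ⟨v2, v3, v4, v1, v0⟩, ⟨v2, v4, v0, v1, v3⟩, ⟨v2, v4, v0, v3, v1⟩,
  ⟨v2, v4, v1, v0, v3⟩, ⟨v2, v4, v1, v3, v0⟩, ⟨v2, v4, v3, v0, v1⟩, ⟨v2, v4, v3, v1, v0⟩,
  ⟨v3, v0, v1, v2, v4⟩, ⟨v3, v0, v1, v4, v2⟩, ⟨v3, v0, v2, v1, v4⟩, ⟨v3, v0, v2, v4, v1⟩,
  ⟨v3, v0, v4, v1, v2⟩, ⟨v3, v0, v4, v2, v1⟩, ⟨v3, v1, v0, v2, v4⟩, ⟨v3, v1, v0, v4, v2⟩,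
  ⟨v3, v1, v2, v0, v4⟩, ⟨v3, v1, v2, v4, v0⟩, ⟨v3, v1, v4, v0, v2⟩, ⟨v3, v1, v4, v2, v0⟩,
  ⟨v3, v2, v0, v1, v4⟩, ⟨v3, v2, v0, v4, v1⟩, ⟨v3, v2, v1, v0, v4⟩, ⟨v3, v2, v1, v4, v0⟩,
  ⟨v3, v2, v4, v0, v1⟩, ⟨v3, v2, v4, v1, v0⟩, ⟨v3, v4, v0, v1, v2⟩, ⟨v3, v4, v0, v2, v1⟩,
  ⟨v3, v4, v1, v0, v2⟩, ⟨v3, v4, v1, v2, v0⟩, ⟨v3, v4, v2, v0, v1⟩, ⟨v3, v4, v2, v1, v0⟩,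
  ⟨v4, v0, v1, v2, v3⟩, ⟨v4, v0, v1, v3, v2⟩, ⟨v4, v0, v2, v1, v3⟩, ⟨v4, v0, v2, v3, v1⟩,
  ⟨v4, v0, v3, v1, v2⟩, ⟨v4, v0, v3, v2, v1⟩, ⟨v4, v1, v0, v2, v3⟩, ⟨v4, v1, v0, v3, v2⟩,
  ⟨v4, v1, v2, v0, v3⟩, ⟨v4, v1, v2, v3, v0⟩, ⟨v4, v1, v3, v0, v2⟩, ⟨v4, v1, v3, v2, v0⟩,
  ⟨v4, v2, v0, v1, v3⟩, ⟨v4, v2, v0, v3, v1⟩, ⟨v4, v2, v1, v0, v3⟩, ⟨v4, v2, v1, v3, v0⟩,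
  ⟨v4, v2, v3, v0, v1⟩, ⟨v4, v2, v3, v1, v0⟩, ⟨v4, v3, v0, v1, v2⟩, ⟨v4, v3, v0, v2, v1⟩,
  ⟨v4, v3, v1, v0, v2⟩, ⟨v4, v3, v1, v2, v0⟩, ⟨v4, v3, v2, v0, v1⟩, ⟨v4, v3, v2, v1, v0⟩]

def wsum (M : I5 → I5 → T) : List T5 → ℕ
  | [] => 0
  | t :: l => w M t + wsum M l

def wt : T → ℕ
  | .z => 0 | .p => 1 | .m => 5

def sc (M : I5 → I5 → T) (i : I5) : ℕ :=
  wt (M i v0) + wt (M i v1) + wt (M i v2) + wt (M i v3) + wt (M i v4)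

def mk (a01 a02 a12 a03 a13 a23 a04 a14 a24 a34 : T) : I5 → I5 → T
  | v0, v0 => .z | v0, v1 => a01 | v0, v2 => a02 | v0, v3 => a03 | v0, v4 => a04
  | v1, v0 => neg a01 | v1, v1 => .z | v1, v2 => a12 | v1, v3 => a13 | v1, v4 => a14
  | v2, v0 => neg a02 | v2, v1 => neg a12 | v2, v2 => .z | v2, v3 => a23 | v2, v4 => a24
  | v3, v0 => neg a03 | v3, v1 => neg a13 | v3, v2 => neg a23 | v3, v3 => .z | v3, v4 => a34
  | v4, v0 => neg a04 | v4, v1 => neg a14 | v4, v2 => neg a24 | v4, v3 => neg a34 | v4, v4 => .z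

/-- `bad ij jk ik`: the triple is a transitive tournament. -/
def bad : T → T → T → Bool
  | .z, _, _ => false
  | _, .z, _ => false
  | _, _, .z => false
  | .p, .p, .m => false
  | .m, .m, .p => false
  | _, _, _ => true

def allT (f : T → Bool) : Bool := f .z && (f .p && f .m)

theorem allT_iff {f : T → Bool} (h : allT f = true) (t : T) : f t = true := by
  unfold allT at h
  simp only [Bool.and_eq_true] at h
  cases t
  · exact h.1
  · exact h.2.1
  · exact h.2.2

def leaf (M : I5 → I5 → T) : Bool :=
  !(Nat.ble (sc M v0) (sc M v1)) || (!(Nat.ble (sc M v1) (sc M v2)) ||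
  (!(Nat.ble (sc M v2) (sc M v3)) || (!(Nat.ble (sc M v3) (sc M v4)) ||
    Nat.ble (wsum M perms) 258720)))

def chk : Bool :=
  allT fun a01 => allT fun a02 => allT fun a12 => bad a01 a12 a02 ||
  (allT fun a03 => allT fun a13 => bad a01 a13 a03 ||
  (allT fun a23 => bad a02 a23 a03 || (bad a12 a23 a13 ||
  (allT fun a04 => allT fun a14 => bad a01 a14 a04 ||
  (allT fun a24 => bad a02 a24 a04 || (bad a12 a24 a14 ||
  (allT fun a34 => bad a03 a34 a04 || (bad a13 a34 a14 || (bad a23 a34 a24 ||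
    leaf (mk a01 a02 a12 a03 a13 a23 a04 a14 a24 a34))))))))))

theorem chk_true : chk = true := by decide +kernel

theorem eq_mk (M : I5 → I5 → T) (hz : ∀ i, M i i = .z) (hn : ∀ i j, M j i = neg (M i j)) :
    M = mk (M v0 v1) (M v0 v2) (M v1 v2) (M v0 v3) (M v1 v3) (M v2 v3)
      (M v0 v4) (M v1 v4) (M v2 v4) (M v3 v4) := by
  funext i j
  cases i <;> cases j <;> first | exact hz _ | rfl | exact hn _ _

theorem core (M : I5 → I5 → T) (hz : ∀ i, M i i = .z) (hn : ∀ i j, M j i = neg (M i j))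
    (hb : ∀ i j k, bad (M i j) (M j k) (M i k) = false)
    (h01 : sc M v0 ≤ sc M v1) (h12 : sc M v1 ≤ sc M v2) (h23 : sc M v2 ≤ sc M v3)
    (h34 : sc M v3 ≤ sc M v4) : wsum M perms ≤ 258720 := by
  have h := chk_true
  unfold chk at h
  have h := allT_iff (allT_iff (allT_iff h (M v0 v1)) (M v0 v2)) (M v1 v2)
  rw [hb, Bool.false_or] at h
  have h := allT_iff (allT_iff h (M v0 v3)) (M v1 v3)
  rw [hb, Bool.false_or] at h
  have h := allT_iff h (M v2 v3)
  rw [hb, Bool.false_or, hb, Bool.false_or] at h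
  have h := allT_iff (allT_iff h (M v0 v4)) (M v1 v4)
  rw [hb, Bool.false_or] at h
  have h := allT_iff h (M v2 v4)
  rw [hb, Bool.false_or, hb, Bool.false_or] at h
  have h := allT_iff h (M v3 v4)
  rw [hb, Bool.false_or, hb, Bool.false_or, hb, Bool.false_or, ← eq_mk M hz hn] at h
  unfold leaf at h
  rw [Nat.ble_eq_true_of_le h01, Nat.ble_eq_true_of_le h12, Nat.ble_eq_true_of_le h23,
    Nat.ble_eq_true_of_le h34] at h
  simp only [Bool.not_true, Bool.false_or] at h
  exact Nat.le_of_ble_eq_true h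

theorem perms_bij : ∀ t ∈ perms, Function.Injective t.f := by
  have h : ∀ t ∈ perms, ∀ i j, t.f i = t.f j → i = j := by decide +kernel
  exact h

theorem perms_nodup : perms.Nodup := by decide +kernel

def T5.ofFun (f : I5 → I5) : T5 := ⟨f v0, f v1, f v2, f v3, f v4⟩

theorem T5.ofFun_f (t : T5) : T5.ofFun t.f = t := rfl

theorem T5.f_ofFun (f : I5 → I5) : (T5.ofFun f).f = f := by
  funext i; cases i <;> rfl

theorem card_perm : Fintype.card (Equiv.Perm I5) = 120 := by
  rw [Fintype.card_perm]; rfl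

def toT (σ : Equiv.Perm I5) : T5 := T5.ofFun σ

theorem toT_inj : Function.Injective toT := by
  intro σ τ h
  have : (toT σ).f = (toT τ).f := by rw [h]
  simp only [toT, T5.f_ofFun] at this
  exact DFunLike.coe_injective this

theorem image_toT : Finset.univ.image toT = perms.toFinset := by
  symm
  apply Finset.eq_of_subset_of_card_le
  · intro t h
    rw [List.mem_toFinset] at h
    have hi := perms_bij t h
    rw [Finset.mem_image]
    refine ⟨Equiv.ofBijective t.f (Finite.injective_iff_bijective.mp hi), Finset.mem_univ _, ?_⟩
    exact T5.ofFun_f t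
  · rw [Finset.card_image_of_injective _ toT_inj, Finset.card_univ, card_perm,
      List.toFinset_card_of_nodup perms_nodup]
    decide

theorem wsum_eq (M : I5 → I5 → T) (l : List T5) : wsum M l = (l.map (w M)).sum := by
  induction l with
  | nil => rfl
  | cons t l ih => simp [wsum, ih]

def id5 : T5 := ⟨v0, v1, v2, v3, v4⟩

theorem wsum_perms (M : I5 → I5 → T) :
    wsum M perms = ∑ σ : Equiv.Perm I5, w (fun i j => M (σ i) (σ j)) id5 := by
  rw [wsum_eq, ← List.sum_toFinset _ perms_nodup, ← image_toT,
    Finset.sum_image (fun a _ b _ h => toT_inj h)]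
  rfl

theorem sc_eq (M : I5 → I5 → T) (i : I5) : sc M i = ∑ j, wt (M i j) := by
  simp [sc, Finset.sum, Finset.univ, Fintype.elems, add_assoc]

theorem sc_perm (M : I5 → I5 → T) (σ : Equiv.Perm I5) (i : I5) :
    sc (fun i j => M (σ i) (σ j)) i = sc M (σ i) := by
  rw [sc_eq, sc_eq]
  exact Equiv.sum_comp σ (fun j => wt (M (σ i) j))

def fe : Fin 5 ≃ I5 where
  toFun := ![v0, v1, v2, v3, v4]
  invFun := fun | v0 => 0 | v1 => 1 | v2 => 2 | v3 => 3 | v4 => 4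
  left_inv := by decide
  right_inv := by intro x; cases x <;> rfl

theorem exists_sort (s : I5 → ℕ) : ∃ σ : Equiv.Perm I5,
    s (σ v0) ≤ s (σ v1) ∧ s (σ v1) ≤ s (σ v2) ∧ s (σ v2) ≤ s (σ v3) ∧ s (σ v3) ≤ s (σ v4) := by
  have h := Tuple.monotone_sort (fun i => s (fe i))
  refine ⟨(fe.symm.trans (Tuple.sort (fun i => s (fe i)))).trans fe, ?_, ?_, ?_, ?_⟩
  · exact h (show (0 : Fin 5) ≤ 1 by decide)
  · exact h (show (1 : Fin 5) ≤ 2 by decide)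
  · exact h (show (2 : Fin 5) ≤ 3 by decide)
  · exact h (show (3 : Fin 5) ≤ 4 by decide)

theorem local_bound (M : I5 → I5 → T) (hz : ∀ i, M i i = .z) (hn : ∀ i j, M j i = neg (M i j))
    (hb : ∀ i j k, bad (M i j) (M j k) (M i k) = false) :
    ∑ σ : Equiv.Perm I5, w (fun i j => M (σ i) (σ j)) id5 ≤ 258720 := by
  obtain ⟨τ, h1, h2, h3, h4⟩ := exists_sort (sc M)
  have := core (fun i j => M (τ i) (τ j)) (fun i => hz _) (fun i j => hn _ _)
    (fun i j k => hb _ _ _) (by simpa only [sc_perm] using h1) (by simpa only [sc_perm] using h2)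
    (by simpa only [sc_perm] using h3) (by simpa only [sc_perm] using h4)
  rw [wsum_perms] at this
  refine le_trans (le_of_eq ?_) this
  exact (Equiv.sum_comp (Equiv.mulLeft τ) (fun σ => w (fun i j => M (σ i) (σ j)) id5)).symm

section Global

variable {V : Type*} [Fintype V] (A : V → V → Prop)

noncomputable def e (u v : V) : T := if A u v then .p else if A v u then .m else .z

theorem e_self (hA : IsOriented A) (u : V) : e A u u = .z := by
  have : ¬ A u u := fun h => hA u u h h
  simp [e, this]

theorem e_neg (hA : IsOriented A) (u v : V) : e A v u = neg (e A u v) := by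
  have := hA u v
  unfold e
  by_cases h1 : A u v <;> by_cases h2 : A v u <;> simp_all [neg]

theorem e_bad (hT : T3Free A) (a b c : V) :
    bad (e A a b) (e A b c) (e A a c) = false := by
  have t1 := hT a b c
  have t2 := hT a c b
  have t3 := hT b a c
  have t4 := hT b c a
  have t5 := hT c a b
  have t6 := hT c b a
  unfold e
  by_cases h1 : A a b <;> by_cases h2 : A b a <;> by_cases h3 : A b c <;> by_cases h4 : A c b <;>
    by_cases h5 : A a c <;> by_cases h6 : A c a <;> simp_all [bad]

def five : (I5 → V) ≃ V × V × V × V × V where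
  toFun x := (x v0, x v1, x v2, x v3, x v4)
  invFun t := fun | v0 => t.1 | v1 => t.2.1 | v2 => t.2.2.1 | v3 => t.2.2.2.1 | v4 => t.2.2.2.2
  left_inv x := by funext i; cases i <;> rfl
  right_inv t := rfl

theorem sum_five (F : V → V → V → V → V → ℤ) :
    ∑ x : I5 → V, F (x v0) (x v1) (x v2) (x v3) (x v4)
      = ∑ a, ∑ b, ∑ c, ∑ d, ∑ f, F a b c d f := by
  have h := Fintype.sum_equiv five (fun x : I5 → V => F (x v0) (x v1) (x v2) (x v3) (x v4))
    (fun t => F t.1 t.2.1 t.2.2.1 t.2.2.2.1 t.2.2.2.2) (fun x => rfl)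
  rw [h]
  simp only [Fintype.sum_prod_type]

theorem sum_w_le (hA : IsOriented A) (hT : T3Free A) :
    ∑ x : I5 → V, w (fun i j => e A (x i) (x j)) id5 ≤ 2156 * Fintype.card V ^ 5 := by
  have h1 : ∑ x : I5 → V, ∑ σ : Equiv.Perm I5, w (fun i j => e A (x (σ i)) (x (σ j))) id5
      ≤ ∑ x : I5 → V, 258720 := by
    apply Finset.sum_le_sum
    intro x _
    exact local_bound (fun i j => e A (x i) (x j)) (fun i => e_self A hA _)
      (fun i j => e_neg A hA _ _) (fun i j k => e_bad A hT _ _ _)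
  rw [Finset.sum_comm] at h1
  have h2 : ∀ σ : Equiv.Perm I5, ∑ x : I5 → V, w (fun i j => e A (x (σ i)) (x (σ j))) id5
      = ∑ x : I5 → V, w (fun i j => e A (x i) (x j)) id5 := by
    intro σ
    exact Equiv.sum_comp (Equiv.arrowCongr σ.symm (Equiv.refl V))
      (fun x : I5 → V => w (fun i j => e A (x i) (x j)) id5)
  rw [Finset.sum_congr rfl (fun σ _ => h2 σ)] at h1
  simp only [Finset.sum_const, Finset.card_univ, card_perm, smul_eq_mul, Fintype.card_fun] at h1
  have h3 : Fintype.card I5 = 5 := rfl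
  rw [h3] at h1
  omega

def tz : T → ℤ
  | .z => 0 | .p => 1 | .m => -1

def bz : Bool → ℤ
  | true => 1 | false => 0

theorem ht_eq (b : Bool) (s t : T) : (ht b s t : ℤ) = 1200 + 1200 * (bz b * (tz s * tz t)) := by
  cases b <;> cases s <;> cases t <;> rfl

/-- The quadratic form. -/
def Q (x1 x2 x3 x4 x5 x6 x7 y1 y2 y3 y4 y5 y6 y7 : ℤ) : ℤ :=
  1680 * (x1 * y1) + 109 * (x1 * y2 + x2 * y1) - 116 * (x1 * y3 + x3 * y1)
      + 150 * (x1 * y4 + x4 * y1) + 10 * (x1 * y5 + x5 * y1)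
      + 190 * (x2 * y2) - 32 * (x2 * y3 + x3 * y2) + 35 * (x2 * y4 + x4 * y2)
      + 20 * (x2 * y5 + x5 * y2) + 236 * (x3 * y3) + 10 * (x3 * y4 + x4 * y3)
      + 50 * (x3 * y5 + x5 * y3) + 20 * (x4 * y4) + 10 * (x4 * y5 + x5 * y4)
      + 20 * (x5 * y5) + 150 * (x6 * y6) + 120 * (x6 * y7 + x7 * y6)
      + 240 * (x7 * y7)

theorem Q_nonneg (x1 x2 x3 x4 x5 x6 x7 : ℤ) :
    0 ≤ Q x1 x2 x3 x4 x5 x6 x7 x1 x2 x3 x4 x5 x6 x7 := by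
  have h : 157344 * Q x1 x2 x3 x4 x5 x6 x7 x1 x2 x3 x4 x5 x6 x7 =
      196680 * ((30) * x1 + (7) * x2 + (2) * x3 + (4) * x4 + (2) * x5) ^ 2
        + 65560 * ((-26) * x1 + (1) * x2 + (18) * x3 + (6) * x5) ^ 2
        + 1639 * ((4) * x1 + (-57) * x2 + (96) * x3) ^ 2
        + 1 * ((6556) * x1 + (-3367) * x2) ^ 2
        + 3530680 * ((1) * x2) ^ 2
        + 944064 * (5 * x6 + 4 * x7) ^ 2
        + 22657536 * x7 ^ 2 := by
    unfold Q
    ring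
  have h2 : 0 ≤ 157344 * Q x1 x2 x3 x4 x5 x6 x7 x1 x2 x3 x4 x5 x6 x7 := by
    rw [h]
    positivity
  linarith

theorem sum_Q {ι κ : Type*} [Fintype ι] [Fintype κ] (f1 f2 f3 f4 f5 f6 f7 : ι → ℤ)
    (h1 h2 h3 h4 h5 h6 h7 : κ → ℤ) :
    ∑ i, ∑ j, Q (f1 i) (f2 i) (f3 i) (f4 i) (f5 i) (f6 i) (f7 i)
        (h1 j) (h2 j) (h3 j) (h4 j) (h5 j) (h6 j) (h7 j)
      = Q (∑ i, f1 i) (∑ i, f2 i) (∑ i, f3 i) (∑ i, f4 i) (∑ i, f5 i) (∑ i, f6 i) (∑ i, f7 i)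
        (∑ i, h1 i) (∑ i, h2 i) (∑ i, h3 i) (∑ i, h4 i) (∑ i, h5 i) (∑ i, h6 i) (∑ i, h7 i) := by
  unfold Q
  simp only [Finset.sum_add_distrib, Finset.sum_sub_distrib, ← Finset.mul_sum, ← Finset.sum_mul]

def qk (s t : Key) : ℤ :=
  Q (g1 s) (g2 s) (g3 s) (g4 s) (g5 s) (g6 s) (g7 s) (g1 t) (g2 t) (g3 t) (g4 t) (g5 t) (g6 t) (g7 t)

theorem sum_qk_nonneg {ι : Type*} [Fintype ι] (k : ι → Key) :
    0 ≤ ∑ i, ∑ j, qk (k i) (k j) := by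
  unfold qk
  rw [sum_Q (fun i => g1 (k i)) (fun i => g2 (k i)) (fun i => g3 (k i)) (fun i => g4 (k i))
    (fun i => g5 (k i)) (fun i => g6 (k i)) (fun i => g7 (k i)) (fun i => g1 (k i))
    (fun i => g2 (k i)) (fun i => g3 (k i)) (fun i => g4 (k i))
    (fun i => g5 (k i)) (fun i => g6 (k i)) (fun i => g7 (k i))]
  exact Q_nonneg _ _ _ _ _ _ _

noncomputable def P (a b c d : V) : ℕ :=
  p4 (e A a b) (e A b c) (e A c d) (e A a c) (e A b d) (e A a d)

noncomputable def K (a b c : V) : Key := key (e A a b) (e A a c) (e A b c)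

noncomputable def B (a b c : V) : ℤ := bz (p3 (e A a b) (e A b c) (e A a c))

noncomputable def H (a b c d : V) : ℤ := tz (hv (e A d b) (e A d a) (e A d c))

theorem w_eq (x : I5 → V) : (w (fun i j => e A (x i) (x j)) id5 : ℤ) =
    2076 + P A (x v0) (x v1) (x v2) (x v3) + qk (K A (x v0) (x v1) (x v2)) (K A (x v0) (x v3) (x v4))
      + 1200 * (B A (x v0) (x v1) (x v2) *
        (H A (x v0) (x v1) (x v2) (x v3) * H A (x v0) (x v1) (x v2) (x v4))) := by
  simp only [w, id5, Nat.cast_add, qt_eq, ht_eq, P, B, H, K, qk, Q]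
  ring

theorem B_nonneg (a b c : V) : 0 ≤ B A a b c := by
  unfold B
  cases p3 (e A a b) (e A b c) (e A a c) <;> simp [bz]

theorem main_bound (hA : IsOriented A) (hT : T3Free A) :
    (Fintype.card V : ℤ) * ∑ a, ∑ b, ∑ c, ∑ d, (P A a b c d : ℤ) ≤ 80 * (Fintype.card V : ℤ) ^ 5 := by
  have h := sum_w_le A hA hT
  have h' : ((∑ x : I5 → V, w (fun i j => e A (x i) (x j)) id5 : ℕ) : ℤ)
      ≤ 2156 * (Fintype.card V : ℤ) ^ 5 := by exact_mod_cast h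
  rw [Nat.cast_sum, Finset.sum_congr rfl (fun x _ => w_eq A x),
    sum_five (fun a b c d f => 2076 + P A a b c d + qk (K A a b c) (K A a d f)
      + 1200 * (B A a b c * (H A a b c d * H A a b c f)))] at h'
  simp only [Finset.sum_add_distrib] at h'
  have e1 : ∑ a : V, ∑ b : V, ∑ c : V, ∑ d : V, ∑ f : V, (2076 : ℤ)
      = 2076 * (Fintype.card V : ℤ) ^ 5 := by
    simp only [Finset.sum_const, Finset.card_univ, nsmul_eq_mul]; ring
  have e2 : ∑ a : V, ∑ b : V, ∑ c : V, ∑ d : V, ∑ f : V, (P A a b c d : ℤ)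
      = (Fintype.card V : ℤ) * ∑ a, ∑ b, ∑ c, ∑ d, (P A a b c d : ℤ) := by
    simp only [Finset.sum_const, Finset.card_univ, nsmul_eq_mul, Finset.mul_sum]
  have e3 : 0 ≤ ∑ a : V, ∑ b : V, ∑ c : V, ∑ d : V, ∑ f : V, qk (K A a b c) (K A a d f) := by
    apply Finset.sum_nonneg
    intro a _
    have := sum_qk_nonneg (fun y : V × V => K A a y.1 y.2)
    simpa only [Fintype.sum_prod_type] using this
  have e4 : 0 ≤ ∑ a : V, ∑ b : V, ∑ c : V, ∑ d : V, ∑ f : V,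
      1200 * (B A a b c * (H A a b c d * H A a b c f)) := by
    refine Finset.sum_nonneg fun a _ => Finset.sum_nonneg fun b _ => Finset.sum_nonneg fun c _ => ?_
    simp only [← Finset.mul_sum, ← Finset.sum_mul]
    have := B_nonneg A a b c
    have := mul_self_nonneg (∑ d, H A a b c d)
    positivity
  rw [e1, e2] at h'
  linarith

end Global

section Upper

variable {V : Type*} [Fintype V] [DecidableEq V] (A : V → V → Prop)

theorem P_path (f : Fin 4 → V) (hA : IsOriented A)
    (hf : ∀ i j : Fin 4, A (f i) (f j) ↔ (j : ℕ) = (i : ℕ) + 1) :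
    P A (f 0) (f 1) (f 2) (f 3) = 10000 := by
  have h01 : e A (f 0) (f 1) = .p := by simp [e, hf]
  have h12 : e A (f 1) (f 2) = .p := by simp [e, hf]
  have h23 : e A (f 2) (f 3) = .p := by simp [e, hf]
  have h02 : e A (f 0) (f 2) = .z := by simp [e, hf]
  have h13 : e A (f 1) (f 3) = .z := by simp [e, hf]
  have h03 : e A (f 0) (f 3) = .z := by simp [e, hf]
  simp only [P, h01, h12, h23, h02, h13, h03, p4]

theorem numPaths_le (hV : Nonempty V) (hA : IsOriented A) :
    10000 * numPaths A 4 ≤ ∑ a, ∑ b, ∑ c, ∑ d, P A a b c d := by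
  have h1 : numPaths A 4 ≤ (Finset.univ.filter fun t : V × V × V × V =>
      P A t.1 t.2.1 t.2.2.1 t.2.2.2 = 10000).card := by
    unfold numPaths
    have hch : ∀ S : Finset V, ∃ t : V × V × V × V, IsInducedPath A 4 S →
        (P A t.1 t.2.1 t.2.2.1 t.2.2.2 = 10000 ∧
          S = {t.1, t.2.1, t.2.2.1, t.2.2.2}) := by
      intro S
      by_cases hS : IsInducedPath A 4 S
      · obtain ⟨f, hi, hm, hf⟩ := hS
        refine ⟨(f 0, f 1, f 2, f 3), fun _ => ⟨P_path A f hA hf, ?_⟩⟩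
        ext v
        rw [hm]
        simp only [Fin.exists_fin_succ, Finset.mem_insert, Finset.mem_singleton]
        simp [eq_comm]
      · obtain ⟨v⟩ := hV
        exact ⟨(v, v, v, v), fun h => absurd h hS⟩
    choose g hg using hch
    apply Finset.card_le_card_of_injOn g
    · intro S hS
      simp only [Finset.coe_filter, Finset.mem_univ, true_and, Set.mem_setOf_eq] at hS ⊢
      exact (hg S hS).1
    · intro S hS S' hS' h
      simp only [Finset.coe_filter, Finset.mem_univ, true_and, Set.mem_setOf_eq] at hS hS'
      rw [(hg S hS).2, (hg S' hS').2, h]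
  have h2 : ∑ a, ∑ b, ∑ c, ∑ d, P A a b c d
      = ∑ t : V × V × V × V, P A t.1 t.2.1 t.2.2.1 t.2.2.2 := by
    simp only [Fintype.sum_prod_type]
  rw [h2]
  calc 10000 * numPaths A 4 ≤ 10000 * (Finset.univ.filter fun t : V × V × V × V =>
      P A t.1 t.2.1 t.2.2.1 t.2.2.2 = 10000).card := by omega
    _ = ∑ t ∈ (Finset.univ.filter fun t : V × V × V × V =>
      P A t.1 t.2.1 t.2.2.1 t.2.2.2 = 10000), P A t.1 t.2.1 t.2.2.1 t.2.2.2 := by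
        rw [Finset.sum_congr rfl (fun t ht => (Finset.mem_filter.mp ht).2)]
        simp [mul_comm]
    _ ≤ _ := Finset.sum_le_sum_of_subset (Finset.filter_subset _ _)

theorem upper (hV : 0 < Fintype.card V) (hA : IsOriented A) (hT : T3Free A) :
    125 * numPaths A 4 ≤ Fintype.card V ^ 4 := by
  have h1 := main_bound A hA hT
  have h2 : (10000 * numPaths A 4 : ℤ) ≤ ∑ a, ∑ b, ∑ c, ∑ d, (P A a b c d : ℤ) := by
    exact_mod_cast numPaths_le A (Fintype.card_pos_iff.mp hV) hA
  have hn : (0 : ℤ) < Fintype.card V := by exact_mod_cast hV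
  have h3 : (Fintype.card V : ℤ) * (10000 * numPaths A 4 : ℤ)
      ≤ Fintype.card V * (80 * (Fintype.card V : ℤ) ^ 4) := by
    calc _ ≤ _ := mul_le_mul_of_nonneg_left h2 hn.le
      _ ≤ _ := h1
      _ = _ := by ring
  have h4 := le_of_mul_le_mul_left h3 hn
  have h5 : (125 * numPaths A 4 : ℤ) ≤ (Fintype.card V : ℤ) ^ 4 := by linarith
  exact_mod_cast h5

end Upper

section Lower

/-- The blow-up of the directed five-cycle. -/
def C5 (n : ℕ) (u v : Fin n) : Prop := v.val % 5 = (u.val + 1) % 5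

theorem C5_oriented (n : ℕ) : IsOriented (C5 n) := by
  intro a b h h'
  unfold C5 at h h'
  omega

theorem C5_free (n : ℕ) : T3Free (C5 n) := by
  rintro a b c ⟨h, h', h''⟩
  unfold C5 at h h' h''
  omega

def pt (n : ℕ) (r : Fin 5) (i : Fin 4 → Fin (n / 5)) (j : Fin 4) : Fin n :=
  ⟨5 * (i j).val + (r.val + j.val) % 5, by have := (i j).isLt; omega⟩

theorem pt_path (n : ℕ) (r : Fin 5) (i : Fin 4 → Fin (n / 5)) :
    IsInducedPath (C5 n) 4 (Finset.univ.image (pt n r i)) := by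
  refine ⟨pt n r i, ?_, by simp, ?_⟩
  · intro j k h
    have h : 5 * (i j).val + (r.val + j.val) % 5 = 5 * (i k).val + (r.val + k.val) % 5 :=
      congrArg Fin.val h
    apply Fin.ext
    omega
  · intro j k
    simp only [C5, pt]
    omega

theorem pt_inj (n : ℕ) : Function.Injective
    (fun x : Fin 5 × (Fin 4 → Fin (n / 5)) => Finset.univ.image (pt n x.1 x.2)) := by
  rintro ⟨r, i⟩ ⟨r', i'⟩ h
  simp only at h
  have key1 : ∀ j, ∃ k, 5 * (i' k).val + (r'.val + k.val) % 5 = 5 * (i j).val + (r.val + j.val) % 5 := by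
    intro j
    have : pt n r i j ∈ Finset.univ.image (pt n r' i') := by
      rw [← h]; exact Finset.mem_image_of_mem _ (Finset.mem_univ _)
    obtain ⟨k, _, hk⟩ := Finset.mem_image.mp this
    exact ⟨k, congrArg Fin.val hk⟩
  have hr : r = r' := by
    obtain ⟨k0, h0⟩ := key1 0
    obtain ⟨k1, h1⟩ := key1 1
    obtain ⟨k2, h2⟩ := key1 2
    obtain ⟨k3, h3⟩ := key1 3
    have e0 : (r'.val + k0.val) % 5 = (r.val + 0) % 5 := by
      simp only [Fin.val_zero] at h0; omega
    have e1 : (r'.val + k1.val) % 5 = (r.val + 1) % 5 := by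
      simp only [Fin.val_one] at h1; omega
    have e2 : (r'.val + k2.val) % 5 = (r.val + 2) % 5 := by
      simp only [Fin.val_two] at h2; omega
    have e3 : (r'.val + k3.val) % 5 = (r.val + 3) % 5 := by
      have : (3 : Fin 4).val = 3 := rfl
      simp only [this] at h3; omega
    clear h0 h1 h2 h3
    have l0 := k0.isLt
    have l1 := k1.isLt
    have l2 := k2.isLt
    have l3 := k3.isLt
    have lr := r.isLt
    have lr' := r'.isLt
    by_contra hne
    have hne' : r.val ≠ r'.val := fun h => hne (Fin.ext h)
    have hc : (r.val + 0) % 5 = (r'.val + 4) % 5 ∨ (r.val + 1) % 5 = (r'.val + 4) % 5 ∨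
        (r.val + 2) % 5 = (r'.val + 4) % 5 ∨ (r.val + 3) % 5 = (r'.val + 4) % 5 := by
      clear e0 e1 e2 e3
      omega
    rcases hc with hc | hc | hc | hc
    · rw [← e0] at hc; omega
    · rw [← e1] at hc; omega
    · rw [← e2] at hc; omega
    · rw [← e3] at hc; omega
  subst hr
  congr 1
  funext j
  obtain ⟨k, hk⟩ := key1 j
  have hjk : k = j := by apply Fin.ext; omega
  subst hjk
  apply Fin.ext
  omega

theorem lower (n : ℕ) : 5 * (n / 5) ^ 4 ≤ numPaths (C5 n) 4 := by
  have h := Finset.card_le_card_of_injOn (s := Finset.univ)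
    (t := Finset.univ.filter fun S : Finset (Fin n) => IsInducedPath (C5 n) 4 S)
    (fun x : Fin 5 × (Fin 4 → Fin (n / 5)) => Finset.univ.image (pt n x.1 x.2))
    (by intro x _; simpa using pt_path n x.1 x.2) ((pt_inj n).injOn)
  simpa [numPaths] using h

end Lower

end P4

theorem P4.dens_le (n : ℕ) (hn : 4 ≤ n) (A : Fin n → Fin n → Prop) (hA : IsOriented A)
    (hT : T3Free A) : pathDensity A 4 ≤ 24 / 125 * ((n : ℝ) / ((n : ℝ) - 3)) ^ 4 := by
  have h1 := P4.upper A (by simp; omega) hA hT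
  rw [Fintype.card_fin] at h1
  have h1' : (125 : ℝ) * numPaths A 4 ≤ (n : ℝ) ^ 4 := by exact_mod_cast h1
  have h2 := Nat.pow_sub_le_descFactorial n 4
  rw [Nat.descFactorial_eq_factorial_mul_choose] at h2
  have h24 : Nat.factorial 4 = 24 := rfl
  rw [h24] at h2
  have h3 : (((n + 1 - 4 : ℕ) : ℝ)) ^ 4 ≤ 24 * (n.choose 4 : ℝ) := by exact_mod_cast h2
  have h4 : ((n + 1 - 4 : ℕ) : ℝ) = (n : ℝ) - 3 := by
    rw [Nat.cast_sub (by omega)]; push_cast; ring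
  rw [h4] at h3
  have hn' : (4 : ℝ) ≤ n := by exact_mod_cast hn
  have hpos : (0 : ℝ) < ((n : ℝ) - 3) ^ 4 := by
    have : (0 : ℝ) < (n : ℝ) - 3 := by linarith
    positivity
  unfold pathDensity
  rw [Fintype.card_fin, div_pow, ← mul_div_assoc]
  have hc : (0 : ℝ) < n.choose 4 := by linarith
  rw [div_le_div_iff₀ hc hpos]
  calc (numPaths A 4 : ℝ) * ((n : ℝ) - 3) ^ 4 ≤ ((n : ℝ) ^ 4 / 125) * (24 * (n.choose 4 : ℝ)) := by
        apply mul_le_mul _ h3 hpos.le (by positivity)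
        linarith
    _ = _ := by ring

theorem P4.dens_ge (n : ℕ) (hn : 4 ≤ n) :
    24 / 125 * (((n : ℝ) - 4) / n) ^ 4 ≤ pathDensity (P4.C5 n) 4 := by
  have h1 : (5 : ℝ) * ((n / 5 : ℕ) : ℝ) ^ 4 ≤ numPaths (P4.C5 n) 4 := by
    exact_mod_cast P4.lower n
  have hn' : (4 : ℝ) ≤ n := by exact_mod_cast hn
  have h2 : ((n : ℝ) - 4) / 5 ≤ ((n / 5 : ℕ) : ℝ) := by
    have : n ≤ 5 * (n / 5) + 4 := by omega
    have : (n : ℝ) ≤ 5 * ((n / 5 : ℕ) : ℝ) + 4 := by exact_mod_cast this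
    linarith
  have h3 : (((n : ℝ) - 4) / 5) ^ 4 ≤ ((n / 5 : ℕ) : ℝ) ^ 4 :=
    pow_le_pow_left₀ (by linarith) h2 4
  have h5 := Nat.descFactorial_le_pow n 4
  rw [Nat.descFactorial_eq_factorial_mul_choose] at h5
  have h24 : Nat.factorial 4 = 24 := rfl
  rw [h24] at h5
  have h6 : 24 * (n.choose 4 : ℝ) ≤ (n : ℝ) ^ 4 := by exact_mod_cast h5
  have hc : (0 : ℝ) < n.choose 4 := by exact_mod_cast Nat.choose_pos hn
  have hp : (0 : ℝ) < (n : ℝ) ^ 4 := by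
    have : (0 : ℝ) < (n : ℝ) := by linarith
    positivity
  unfold pathDensity
  rw [Fintype.card_fin, div_pow, ← mul_div_assoc, div_le_div_iff₀ hp hc]
  have h7 : ((n : ℝ) - 4) ^ 4 / 125 ≤ numPaths (P4.C5 n) 4 := by
    rw [div_pow] at h3
    linarith
  calc 24 / 125 * ((n : ℝ) - 4) ^ 4 * (n.choose 4 : ℝ)
      = (((n : ℝ) - 4) ^ 4 / 125) * (24 * (n.choose 4 : ℝ)) := by ring
    _ ≤ _ := by
        apply mul_le_mul h7 h6 (by positivity) (by positivity)

theorem P4.lim0 (c : ℝ) : Filter.Tendsto (fun n : ℕ => (1 : ℝ) - c / n) Filter.atTop (nhds 1) := by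
  simpa using (tendsto_const_div_atTop_nhds_zero_nat c).const_sub 1

theorem P4.limU : Filter.Tendsto (fun n : ℕ => (24 / 125 : ℝ) * ((n : ℝ) / ((n : ℝ) - 3)) ^ 4)
    Filter.atTop (nhds (24 / 125)) := by
  have h := (((P4.lim0 3).inv₀ one_ne_zero).pow 4).const_mul (24 / 125 : ℝ)
  norm_num at h
  refine h.congr' ?_
  filter_upwards [Filter.eventually_ge_atTop 4] with n hn
  have hn' : (4 : ℝ) ≤ n := by exact_mod_cast hn
  have h1 : (n : ℝ) ≠ 0 := by linarith
  have h2 : (n : ℝ) - 3 ≠ 0 := by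
    intro h
    linarith
  have h3 : (1 : ℝ) - 3 / n = (n - 3) / n := by field_simp
  rw [h3, ← inv_pow, inv_div]

theorem P4.limL : Filter.Tendsto (fun n : ℕ => (24 / 125 : ℝ) * (((n : ℝ) - 4) / n) ^ 4)
    Filter.atTop (nhds (24 / 125)) := by
  have h := ((P4.lim0 4).pow 4).const_mul (24 / 125 : ℝ)
  norm_num at h
  refine h.congr' ?_
  filter_upwards [Filter.eventually_ge_atTop 4] with n hn
  have hn' : (4 : ℝ) ≤ n := by exact_mod_cast hn
  have h1 : (n : ℝ) ≠ 0 := by linarith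
  have h3 : (1 : ℝ) - 4 / n = (n - 4) / n := by field_simp
  rw [h3]


/-- The inducibility of `P⃗₄` in the family of `T⃗₃`-free oriented
graphs equals `24/125`: the maximum density of induced copies of `P⃗₄` over `T⃗₃`-free
oriented graphs on `n` vertices tends to `24/125` as `n → ∞`. -/
theorem inducibility_P4_T3free :
    Filter.Tendsto (fun n : ℕ => maxDensityT3 4 n) Filter.atTop (nhds (24 / 125)) := by
  refine tendsto_of_tendsto_of_tendsto_of_le_of_le' P4.limL P4.limU ?_ ?_
  · filter_upwards [Filter.eventually_ge_atTop 4] with n hn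
    refine (P4.dens_ge n hn).trans ?_
    apply le_csSup
    · refine ⟨24 / 125 * ((n : ℝ) / ((n : ℝ) - 3)) ^ 4, ?_⟩
      rintro d ⟨A, hA, hT, rfl⟩
      exact P4.dens_le n hn A hA hT
    · exact ⟨P4.C5 n, P4.C5_oriented n, P4.C5_free n, rfl⟩
  · filter_upwards [Filter.eventually_ge_atTop 4] with n hn
    apply csSup_le
    · exact ⟨_, P4.C5 n, P4.C5_oriented n, P4.C5_free n, rfl⟩
    · rintro d ⟨A, hA, hT, rfl⟩
      exact P4.dens_le n hn A hA hT
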